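/- Let f : ℝ² → ℝ be of class C² with D²f(p)(q,q) > 0 for all p, q ∈ ℝ² with q ≠ 0, and let u ∈ C²(ℝ²) solve div[Df(∇u)] = 0 on ℝ². Then there is a constant c > 0, independent of R and η, such that for every R > 0 and every η ∈ C₀^∞(B_{2R}) with 0 ≤ η ≤ 1 one has: ∫_{B_{2R}} η² · D²f(∇u)(∇∂₁u, ∇∂₁u) · Γ₁^{−1/2} dx ≤ c · ∫_{B_{2R}} D²f(∇u)(∇η, ∇η) · Γ₁^{1/2} · ln²(e²−1+Γ₁) dx, where Γ₁ := 1 + |∂₁u|². -/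

import Mathlib

open Real MeasureTheory Metric
open scoped ENNReal

noncomputable section

/-- `ℝ²` with its Euclidean structure. -/
abbrev E2 : Type := EuclideanSpace ℝ (Fin 2)

/-- The `i`-th standard basis vector of `ℝ²`. -/
def ee (i : Fin 2) : E2 := EuclideanSpace.single i 1

/-- The Hessian bilinear form `D²f(p)(q,q)`. -/
def Hess (f : E2 → ℝ) (p q : E2) : ℝ := iteratedFDeriv ℝ 2 f p ![q, q]

/-- The partial derivative `∂ᵢu(x)`. -/
def pd (u : E2 → ℝ) (i : Fin 2) (x : E2) : ℝ := fderiv ℝ u x (ee i)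

/-- The equation `div [Df(∇u)] = 0`, i.e. `∑ i, ∂ᵢ[(∂f/∂pᵢ)(∇u(x))] = 0` on `ℝ²`. -/
def solves (f u : E2 → ℝ) : Prop :=
  ∀ x : E2, ∑ i : Fin 2, fderiv ℝ (fun y => fderiv ℝ f (gradient u y) (ee i)) x (ee i) = 0

theorem Hess_eq_fderiv (f : E2 → ℝ) (p q : E2) :
    Hess f p q = fderiv ℝ (fderiv ℝ f) p q q := by
  simp [Hess, iteratedFDeriv_two_apply]

theorem inner_gradient_eq_fderiv (g : E2 → ℝ) (x v : E2) :
    inner ℝ (gradient g x) v = fderiv ℝ g x v := by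
  simp [gradient]

theorem ContDiff.continuous_gradient {g : E2 → ℝ} (hg : ContDiff ℝ 1 g) :
    Continuous (gradient g) :=
  (InnerProductSpace.toDual ℝ E2).symm.continuous.comp (hg.continuous_fderiv one_ne_zero)

theorem ContDiff.contDiff_gradient {u : E2 → ℝ} (hu : ContDiff ℝ 2 u) :
    ContDiff ℝ 1 (gradient u) :=
  (InnerProductSpace.toDual ℝ E2).symm.contDiff.comp (hu.fderiv_right (m := 1) (by norm_num))

theorem contDiff_pd {u : E2 → ℝ} (hu : ContDiff ℝ 2 u) (i : Fin 2) :
    ContDiff ℝ 1 (pd u i) :=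
  (hu.fderiv_right (m := 1) (by norm_num)).clm_apply contDiff_const

theorem gradient_eq_zero_of_notMem_tsupport {g : E2 → ℝ} {x : E2} (hx : x ∉ tsupport g) :
    gradient g x = 0 := by
  simp [gradient, fderiv_of_notMem_tsupport (𝕜 := ℝ) hx]

/-- A continuous linear functional on the plane, expanded along a gradient. -/
theorem apply_gradient_eq_sum (L : E2 →L[ℝ] ℝ) (g : E2 → ℝ) (x : E2) :
    L (gradient g x) = ∑ i : Fin 2, L (ee i) * fderiv ℝ g x (ee i) := by
  have hcoord : ∀ i : Fin 2, gradient g x i = fderiv ℝ g x (ee i) := fun i => by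
    rw [← inner_gradient_eq_fderiv, ee, EuclideanSpace.inner_single_right]
    simp
  have hsum : gradient g x = ∑ i : Fin 2, fderiv ℝ g x (ee i) • ee i := by
    ext j
    fin_cases j <;> simp [Fin.sum_univ_two, ee, hcoord]
  rw [hsum, map_sum]
  exact Finset.sum_congr rfl fun i _ => by rw [map_smul, smul_eq_mul, mul_comm]

/-- Mixed second derivatives commute: the `i`-th derivative of the gradient is the gradient of
the `i`-th derivative. -/
theorem fderiv_gradient_apply_ee {u : E2 → ℝ} (hu : ContDiff ℝ 2 u) (i : Fin 2) (x : E2) :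
    fderiv ℝ (gradient u) x (ee i) = gradient (pd u i) x := by
  have hdiff : DifferentiableAt ℝ (fderiv ℝ u) x :=
    (hu.fderiv_right (m := 1) (by norm_num)).differentiable one_ne_zero x
  have hgrad := (hu.contDiff_gradient.differentiable one_ne_zero x).hasFDerivAt
  refine ext_inner_right ℝ fun v => ?_
  have happly : ∀ w, HasFDerivAt (fun y => fderiv ℝ u y w) _ x := fun w =>
    hdiff.hasFDerivAt.clm_apply (hasFDerivAt_const w x)
  have hinner := hgrad.inner ℝ (hasFDerivAt_const v x)
  simp only [inner_gradient_eq_fderiv] at hinner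
  have hright := congrArg (fun L => L (ee i)) (hinner.unique (happly v))
  have hpd : fderiv ℝ (pd u i) x = _ := (happly (ee i)).fderiv
  have hsymm := (hu.contDiffAt (x := x)).isSymmSndFDerivAt (by simp)
  rw [inner_gradient_eq_fderiv, hpd]
  simpa [hsymm.eq v (ee i)] using hright

theorem hasDerivAt_integral_translate_mul {G ψ : E2 → ℝ} (hG : ContDiff ℝ 1 G)
    (hψ : Continuous ψ) (hψc : HasCompactSupport ψ) (v : E2) :
    HasDerivAt (fun h : ℝ => ∫ x, G (x + h • v) * ψ x) (∫ x, fderiv ℝ G x v * ψ x) 0 := by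
  have hG' : Continuous (fderiv ℝ G) := hG.continuous_fderiv one_ne_zero
  have hcont : Continuous fun z : E2 × ℝ => fderiv ℝ G (z.1 + z.2 • v) v := by fun_prop
  obtain ⟨C, hC⟩ := (hψc.isCompact.prod
    (isCompact_closedBall (0 : ℝ) 1)).exists_bound_of_continuousOn hcont.continuousOn
  have key := hasDerivAt_integral_of_dominated_loc_of_deriv_le (μ := (volume : Measure E2))
    (F := fun (h : ℝ) x => G (x + h • v) * ψ x)
    (F' := fun (h : ℝ) x => fderiv ℝ G (x + h • v) v * ψ x) (x₀ := (0 : ℝ))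
    (s := closedBall 0 1) (bound := fun x => C * ‖ψ x‖)
    (closedBall_mem_nhds _ one_pos)
    (.of_forall fun h => (by fun_prop : Continuous _).aestronglyMeasurable)
    ((by fun_prop : Continuous _).integrable_of_hasCompactSupport hψc.mul_left)
    (by fun_prop : Continuous _).aestronglyMeasurable
    (.of_forall fun x h hh => by
      rw [norm_mul]
      by_cases hx : x ∈ tsupport ψ
      · exact mul_le_mul_of_nonneg_right (hC (x, h) ⟨hx, hh⟩) (norm_nonneg _)
      · simp [image_eq_zero_of_notMem_tsupport hx])
    ((hψ.integrable_of_hasCompactSupport hψc).norm.const_mul C)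
    (.of_forall fun x h _ => by
      have hline : HasDerivAt (fun t : ℝ => x + t • v) v h := by
        simpa using ((hasDerivAt_id h).smul_const v).const_add x
      exact (((hG.differentiable one_ne_zero _).hasFDerivAt).comp_hasDerivAt h hline).mul_const _)
  simpa using key.2

/-- The weak form of `div V = 0`. -/
theorem integral_sum_mul_fderiv_eq_zero {V : Fin 2 → E2 → ℝ} {φ : E2 → ℝ}
    (hV : ∀ i, ContDiff ℝ 1 (V i)) (hdiv : ∀ x, ∑ i, fderiv ℝ (V i) x (ee i) = 0)
    (hφ : ContDiff ℝ 1 φ) (hφc : HasCompactSupport φ) :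
    ∑ i, ∫ x, V i x * fderiv ℝ φ x (ee i) = 0 := by
  have hφ' : Continuous (fderiv ℝ φ) := hφ.continuous_fderiv one_ne_zero
  have hint : ∀ i, Integrable fun x => fderiv ℝ (V i) x (ee i) * φ x := fun i =>
    ((((hV i).continuous_fderiv one_ne_zero).clm_apply continuous_const).mul
      hφ.continuous).integrable_of_hasCompactSupport hφc.mul_left
  have hparts : ∀ i, ∫ x, V i x * fderiv ℝ φ x (ee i) = -∫ x, fderiv ℝ (V i) x (ee i) * φ x :=
    fun i => integral_mul_fderiv_eq_neg_fderiv_mul_of_integrable (hint i)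
      (((hV i).continuous.mul (hφ'.clm_apply continuous_const)).integrable_of_hasCompactSupport
        (hφc.fderiv_apply ℝ (ee i)).mul_left)
      (((hV i).continuous.mul hφ.continuous).integrable_of_hasCompactSupport hφc.mul_left)
      (fun x _ => (hV i).differentiable one_ne_zero x)
      (fun x _ => hφ.differentiable one_ne_zero x)
  simp_rw [hparts]
  rw [Finset.sum_neg_distrib, ← integral_finsetSum _ fun i _ => hint i]
  simp [← Finset.sum_mul, hdiv]

/-- The weak form of the equation obtained by differentiating `div V = 0` in direction `v`. -/
theorem integral_sum_fderiv_mul_fderiv_eq_zero {V : Fin 2 → E2 → ℝ} {φ : E2 → ℝ}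
    (hV : ∀ i, ContDiff ℝ 1 (V i)) (hdiv : ∀ x, ∑ i, fderiv ℝ (V i) x (ee i) = 0)
    (hφ : ContDiff ℝ 1 φ) (hφc : HasCompactSupport φ) (v : E2) :
    ∫ x, ∑ i, fderiv ℝ (V i) x v * fderiv ℝ φ x (ee i) = 0 := by
  have hφ' : Continuous (fderiv ℝ φ) := hφ.continuous_fderiv one_ne_zero
  have hderiv : HasDerivAt (fun h : ℝ => ∑ i, ∫ x, V i (x + h • v) * fderiv ℝ φ x (ee i))
      (∑ i, ∫ x, fderiv ℝ (V i) x v * fderiv ℝ φ x (ee i)) 0 :=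
    HasDerivAt.fun_sum fun i _ => hasDerivAt_integral_translate_mul (hV i)
      (hφ'.clm_apply continuous_const) (hφc.fderiv_apply ℝ (ee i)) v
  have hzero : ∀ h : ℝ, ∑ i, ∫ x, V i (x + h • v) * fderiv ℝ φ x (ee i) = 0 := fun h =>
    integral_sum_mul_fderiv_eq_zero (V := fun i x => V i (x + h • v))
      (fun i => (hV i).comp (contDiff_id.add contDiff_const))
      (fun x => by simpa only [fderiv_comp_add_right] using hdiv (x + h • v)) hφ hφc
  simp_rw [hzero] at hderiv
  have hint : ∀ i, Integrable fun x => fderiv ℝ (V i) x v * fderiv ℝ φ x (ee i) := fun i =>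
    ((((hV i).continuous_fderiv one_ne_zero).clm_apply continuous_const).mul
      (hφ'.clm_apply continuous_const)).integrable_of_hasCompactSupport
        (hφc.fderiv_apply ℝ (ee i)).mul_left
  rw [integral_finsetSum _ fun i _ => hint i]
  exact hderiv.unique (hasDerivAt_const _ _)

/-- The weak form of the differentiated equation: `∫ D²f(∇u)(∇∂ⱼu, ∇φ) = 0`. -/
theorem solves.integral_hessian_eq_zero {f u φ : E2 → ℝ} (heq : solves f u)
    (hf : ContDiff ℝ 2 f) (hu : ContDiff ℝ 2 u) (hφ : ContDiff ℝ 1 φ)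
    (hφc : HasCompactSupport φ) (j : Fin 2) :
    ∫ x, fderiv ℝ (fderiv ℝ f) (gradient u x) (gradient (pd u j) x) (gradient φ x) = 0 := by
  have hf' : ContDiff ℝ 1 (fderiv ℝ f) := hf.fderiv_right (by norm_num)
  have hflux : ContDiff ℝ 1 fun y => fderiv ℝ f (gradient u y) := hf'.comp hu.contDiff_gradient
  have key := integral_sum_fderiv_mul_fderiv_eq_zero
    (V := fun i y => fderiv ℝ f (gradient u y) (ee i))
    (fun i => hflux.clm_apply contDiff_const) heq hφ hφc (ee j)
  rw [← key]
  congr 1 with x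
  rw [apply_gradient_eq_sum]
  refine Finset.sum_congr rfl fun i _ => ?_
  have hcomp : HasFDerivAt (fun y => fderiv ℝ f (gradient u y)) _ x :=
    (hf'.differentiable one_ne_zero (gradient u x)).hasFDerivAt.comp x
      (hu.contDiff_gradient.differentiable one_ne_zero x).hasFDerivAt
  have hcoord := (hcomp.clm_apply (hasFDerivAt_const (ee i) x)).fderiv
  rw [hcoord, ← fderiv_gradient_apply_ee hu]
  simp

theorem abs_arsinh_le_log (t : ℝ) :
    |arsinh t| ≤ log (exp 1 ^ 2 - 1 + (1 + t ^ 2)) := by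
  have hexp : (2 : ℝ) ≤ exp 1 := by linarith [add_one_le_exp (1 : ℝ)]
  have hsqrt : √(1 + t ^ 2) ≤ (2 + t ^ 2) / 2 := by
    rw [Real.sqrt_le_left (by positivity)]
    nlinarith [sq_nonneg (t ^ 2)]
  have hbound : ∀ s : ℝ, s ^ 2 = t ^ 2 → arsinh s ≤ log (exp 1 ^ 2 - 1 + (1 + t ^ 2)) := by
    intro s hs
    rw [le_log_iff_exp_le (by nlinarith [sq_nonneg t]), exp_arsinh, hs]
    nlinarith [sq_nonneg (s - 1)]
  exact abs_le'.2 ⟨hbound t rfl, by rw [← arsinh_neg]; exact hbound (-t) (by ring)⟩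

theorem gradient_sq_mul_arsinh {η w : E2 → ℝ} {x : E2} (hη : DifferentiableAt ℝ η x)
    (hw : DifferentiableAt ℝ w x) :
    gradient (fun y => η y ^ 2 * arsinh (w y)) x =
      (η x ^ 2 * (√(1 + w x ^ 2))⁻¹) • gradient w x
        + (2 * η x * arsinh (w x)) • gradient η x := by
  have h := (hη.hasFDerivAt.pow 2).mul hw.hasFDerivAt.arsinh
  refine ext_inner_right ℝ fun v => ?_
  rw [inner_add_left, inner_smul_left, inner_smul_left]
  simp only [inner_gradient_eq_fderiv]
  have h' : fderiv ℝ (fun y => η y ^ 2 * arsinh (w y)) x = _ := h.fderiv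
  rw [h']
  simp
  ring

/-- Young's inequality for a nonnegative quadratic form `B`, weighted for the test function
`η² arsinh w`. -/
theorem caccioppoli_pointwise (B : E2 →L[ℝ] E2 →L[ℝ] ℝ) (hsymm : ∀ v w, B v w = B w v)
    (hnonneg : ∀ v, 0 ≤ B v v) (a b : E2) {e g s l : ℝ} (hs : 0 < s) (hg : |g| ≤ l) :
    1 / 2 * (e ^ 2 * B a a * s⁻¹) - 2 * (B b b * s * l ^ 2) ≤
      B a ((e ^ 2 * s⁻¹) • a + (2 * e * g) • b) := by
  have hquad : 0 ≤ e ^ 2 * B a a + 4 * e * g * s * B a b + 4 * g ^ 2 * s ^ 2 * B b b := by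
    have h := hnonneg (e • a + (2 * g * s) • b)
    simp only [map_add, map_smul, add_apply, smul_apply, smul_eq_mul, hsymm b a] at h
    linarith
  have hgl : g ^ 2 ≤ l ^ 2 := sq_le_sq' (abs_le.1 hg).1 (abs_le.1 hg).2
  have hB : B b b * s * g ^ 2 ≤ B b b * s * l ^ 2 :=
    mul_le_mul_of_nonneg_left hgl (mul_nonneg (hnonneg b) hs.le)
  have hdiv := mul_nonneg hquad (inv_nonneg.2 hs.le)
  have hexpand : (e ^ 2 * B a a + 4 * e * g * s * B a b + 4 * g ^ 2 * s ^ 2 * B b b) * s⁻¹ =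
      e ^ 2 * B a a * s⁻¹ + 4 * e * g * B a b + 4 * (B b b * s * g ^ 2) := by
    field_simp
  rw [hexpand] at hdiv
  simp only [map_add, map_smul, smul_eq_mul]
  linarith

theorem statement11 (f u : E2 → ℝ)
    (hf : ContDiff ℝ 2 f)
    (hpos : ∀ p q : E2, q ≠ 0 → 0 < Hess f p q)
    (hu : ContDiff ℝ 2 u) (heq : solves f u) :
    ∃ c : ℝ, 0 < c ∧ ∀ R : ℝ, 0 < R → ∀ η : E2 → ℝ,
      ContDiff ℝ (⊤ : ℕ∞) η → HasCompactSupport η → tsupport η ⊆ ball (0 : E2) (2 * R) →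
      (∀ x : E2, 0 ≤ η x) → (∀ x : E2, η x ≤ 1) →
      ∫ x in ball (0 : E2) (2 * R),
          (η x) ^ 2 * Hess f (gradient u x) (gradient (pd u 0) x) *
            (1 + (pd u 0 x) ^ 2) ^ (-(1:ℝ)/2)
        ≤ c * ∫ x in ball (0 : E2) (2 * R),
            Hess f (gradient u x) (gradient η x) * (1 + (pd u 0 x) ^ 2) ^ ((1:ℝ)/2) *
              (Real.log (Real.exp 1 ^ 2 - 1 + (1 + (pd u 0 x) ^ 2))) ^ 2 := by
  refine ⟨4, by norm_num, fun R _ η hη hηc hηsupp _ _ => ?_⟩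
  have hη1 : ContDiff ℝ 1 η := hη.of_le (by exact_mod_cast le_top)
  have hw := contDiff_pd hu 0
  have hf'' : Continuous fun x => fderiv ℝ (fderiv ℝ f) (gradient u x) :=
    ((hf.fderiv_right (m := 1) (by norm_num)).continuous_fderiv one_ne_zero).comp
      hu.contDiff_gradient.continuous
  have hnonneg : ∀ p q, 0 ≤ fderiv ℝ (fderiv ℝ f) p q q := fun p q => by
    rcases eq_or_ne q 0 with rfl | hq
    · simp
    · exact (Hess_eq_fderiv f p q ▸ hpos p q hq).le
  have hneg : ∀ t : ℝ, (1 + t ^ 2) ^ (-(1:ℝ)/2) = (√(1 + t ^ 2))⁻¹ := fun t => by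
    rw [sqrt_eq_rpow, ← rpow_neg (by positivity)]
    norm_num
  simp only [Hess_eq_fderiv, hneg, ← sqrt_eq_rpow]
  have hzero : ∀ x, x ∉ ball (0 : E2) (2 * R) → η x = 0 ∧ gradient η x = 0 := fun x hx =>
    ⟨image_eq_zero_of_notMem_tsupport fun h => hx (hηsupp h),
      gradient_eq_zero_of_notMem_tsupport fun h => hx (hηsupp h)⟩
  rw [setIntegral_eq_integral_of_forall_compl_eq_zero fun x hx => by simp [(hzero x hx).1],
    setIntegral_eq_integral_of_forall_compl_eq_zero fun x hx => by simp [(hzero x hx).2]]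
  have hsq : ∀ x, √(1 + pd u 0 x ^ 2) ≠ 0 := fun x => by positivity
  have hlog : ∀ x, exp 1 ^ 2 - 1 + (1 + pd u 0 x ^ 2) ≠ 0 := fun x => by
    have := exp_pos (1 : ℝ)
    nlinarith [sq_nonneg (pd u 0 x)]
  have hw0 := hw.continuous
  have hη0 := hη1.continuous
  have hgw := hw.continuous_gradient
  have hgη := hη1.continuous_gradient
  have hleft : Integrable fun x => η x ^ 2 * fderiv ℝ (fderiv ℝ f) (gradient u x)
      (gradient (pd u 0) x) (gradient (pd u 0) x) * (√(1 + pd u 0 x ^ 2))⁻¹ := by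
    refine Continuous.integrable_of_hasCompactSupport (by fun_prop (disch := assumption)) ?_
    exact HasCompactSupport.intro hηc.isCompact fun x hx => by
      simp [image_eq_zero_of_notMem_tsupport hx]
  have hright : Integrable fun x => fderiv ℝ (fderiv ℝ f) (gradient u x)
      (gradient η x) (gradient η x) * √(1 + pd u 0 x ^ 2) *
        log (exp 1 ^ 2 - 1 + (1 + pd u 0 x ^ 2)) ^ 2 := by
    refine Continuous.integrable_of_hasCompactSupport (by fun_prop (disch := assumption)) ?_
    exact HasCompactSupport.intro hηc.isCompact fun x hx => by
      simp [gradient_eq_zero_of_notMem_tsupport hx]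
  have hφ : ContDiff ℝ 1 fun x => η x ^ 2 * arsinh (pd u 0 x) := (hη1.pow 2).mul hw.arsinh
  have hφc : HasCompactSupport fun x => η x ^ 2 * arsinh (pd u 0 x) :=
    HasCompactSupport.intro hηc.isCompact fun x hx => by
      simp [image_eq_zero_of_notMem_tsupport hx]
  have hgφ := hφ.continuous_gradient
  have htest : Integrable fun x => fderiv ℝ (fderiv ℝ f) (gradient u x) (gradient (pd u 0) x)
      (gradient (fun y => η y ^ 2 * arsinh (pd u 0 y)) x) := by
    refine Continuous.integrable_of_hasCompactSupport (by fun_prop) ?_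
    exact HasCompactSupport.intro hφc.isCompact fun x hx => by
      rw [gradient_eq_zero_of_notMem_tsupport hx, map_zero]
  have hmono := integral_mono ((hleft.const_mul (1 / 2)).sub (hright.const_mul 2)) htest
    fun x => by
      rw [gradient_sq_mul_arsinh (hη1.differentiable one_ne_zero x)
        (hw.differentiable one_ne_zero x)]
      exact caccioppoli_pointwise _
        ((hf.contDiffAt.isSymmSndFDerivAt (by simp)).eq) (hnonneg _) _ _
        (by positivity) (abs_arsinh_le_log _)
  rw [heq.integral_hessian_eq_zero hf hu hφ hφc 0,
    integral_sub' (hleft.const_mul _) (hright.const_mul _), integral_const_mul,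
    integral_const_mul] at hmono
  linarith
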